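/- If X is an E-valued random variable with density p(·;θ*) with respect to μ, then for every θ' ∈ Θ the single-observation composite likelihood ratio has expectation at most one: E[p_{α,β}(X;θ')/p_{α,β}(X;θ*)] ≤ 1, where the ratio is taken to be 0 when the denominator is 0. -/

import Mathlib

open MeasureTheory ENNReal
open scoped BigOperators Classical

noncomputable section

/-- Division in `ℝ≥0∞` with the convention that the ratio is `0` when the
denominator is `0`. -/
def safeDiv (a b : ℝ≥0∞) : ℝ≥0∞ := if b = 0 then 0 else a / b

variable {d : ℕ} {π : Fin d → Type*} [∀ i, MeasurableSpace (π i)]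

/-- The marginal density on the coordinates in `S`, obtained by integrating a density
out over the coordinates in `[d] \ S` (as a function of the full vector, depending only
on the coordinates in `S`). -/
def marginal (μ : ∀ i, Measure (π i)) (S : Finset (Fin d))
    (f : (∀ i, π i) → ℝ≥0∞) : (∀ i, π i) → ℝ≥0∞ :=
  MeasureTheory.lmarginal μ Sᶜ f

/-- The conditional density of the coordinates in `T1` given the coordinates in `T2`,
with the convention that the ratio is `0` when the denominator is `0`. -/
def condDens (μ : ∀ i, Measure (π i)) (T1 T2 : Finset (Fin d))
    (f : (∀ i, π i) → ℝ≥0∞) (x : ∀ i, π i) : ℝ≥0∞ :=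
  safeDiv (marginal μ (T1 ∪ T2) f x) (marginal μ T2 f x)

/-- `𝕊_d`: the nonempty subsets of `[d]`. -/
abbrev Sd (d : ℕ) := {S : Finset (Fin d) // S.Nonempty}

/-- `𝕋_d`: ordered pairs of disjoint nonempty subsets of `[d]`. -/
abbrev Td (d : ℕ) := {T : Finset (Fin d) × Finset (Fin d) //
  T.1.Nonempty ∧ T.2.Nonempty ∧ Disjoint T.1 T.2}

/-- The individual composite likelihood
`p_{α,β}(x;θ) = ∏_S p_S(x_S;θ)^(α_S/γ) ∏_T p(x_{T←}|x_{T→};θ)^(β_T/γ)`,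
where `f = p(·;θ)` is the joint density. -/
def compLik (μ : ∀ i, Measure (π i)) (α : Sd d → ℝ) (β : Td d → ℝ) (γ : ℝ)
    (f : (∀ i, π i) → ℝ≥0∞) (x : ∀ i, π i) : ℝ≥0∞ :=
  (∏ S : Sd d, marginal μ S.1 f x ^ (α S / γ)) *
  (∏ T : Td d, condDens μ T.1.1 T.1.2 f x ^ (β T / γ))



lemma aux_pull (μ : ∀ i, Measure (π i)) (s : Finset (Fin d))
    (g f : (∀ i, π i) → ℝ≥0∞) (hg : ∀ x y, (∀ i ∉ s, x i = y i) → g x = g y)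
    (hf : Measurable f) :
    lmarginal μ s (fun x => g x * f x) = fun x => g x * lmarginal μ s f x := by
  ext x
  unfold lmarginal
  have hm : Measurable fun y => f (Function.updateFinset x s y) :=
    hf.comp measurable_updateFinset
  rw [← lintegral_const_mul _ hm]
  refine lintegral_congr fun y => ?_
  beta_reduce
  rw [hg (Function.updateFinset x s y) x]
  intro i hi
  simp [Function.updateFinset, hi]

lemma aux_marg_dep (μ : ∀ i, Measure (π i)) (S : Finset (Fin d))
    (f : (∀ i, π i) → ℝ≥0∞) (x y : ∀ i, π i) (h : ∀ i ∈ S, x i = y i) :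
    marginal μ S f x = marginal μ S f y := by
  unfold marginal
  apply lmarginal_congr
  intro i hi
  exact h i (by simpa using hi)

lemma aux_marg_meas (μ : ∀ i, Measure (π i)) [∀ i, SigmaFinite (μ i)] (S : Finset (Fin d))
    (f : (∀ i, π i) → ℝ≥0∞) (hf : Measurable f) : Measurable (marginal μ S f) :=
  hf.lmarginal μ

lemma aux_safeDiv_meas {Y : Type*} [MeasurableSpace Y] {f g : Y → ℝ≥0∞}
    (hf : Measurable f) (hg : Measurable g) : Measurable (fun y => safeDiv (f y) (g y)) := by
  unfold safeDiv
  exact Measurable.ite (hg (measurableSet_singleton 0)) measurable_const (hf.div hg)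

lemma aux_cond_meas (μ : ∀ i, Measure (π i)) [∀ i, SigmaFinite (μ i)] (A B : Finset (Fin d))
    (f : (∀ i, π i) → ℝ≥0∞) (hf : Measurable f) : Measurable (condDens μ A B f) :=
  aux_safeDiv_meas (aux_marg_meas μ _ f hf) (aux_marg_meas μ _ f hf)

lemma aux_total (μ : ∀ i, Measure (π i)) [∀ i, SigmaFinite (μ i)] (S : Finset (Fin d))
    (f : (∀ i, π i) → ℝ≥0∞) (hf : Measurable f) (x : ∀ i, π i) :
    ∫⁻ x, f x ∂(Measure.pi μ) = lmarginal μ S (marginal μ S f) x := by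
  rw [lintegral_eq_lmarginal_univ x, ← Finset.union_compl S,
    lmarginal_union μ f hf disjoint_compl_right]
  rfl

lemma aux_total_mul (μ : ∀ i, Measure (π i)) [∀ i, SigmaFinite (μ i)] (S : Finset (Fin d))
    (g f : (∀ i, π i) → ℝ≥0∞) (hgm : Measurable g) (hf : Measurable f)
    (hg : ∀ x y, (∀ i ∈ S, x i = y i) → g x = g y) (x : ∀ i, π i) :
    ∫⁻ x, g x * f x ∂(Measure.pi μ) = lmarginal μ S (fun x => g x * marginal μ S f x) x := by
  rw [aux_total μ S (fun x => g x * f x) (hgm.mul hf) x]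
  congr 1
  unfold marginal
  apply aux_pull μ _ g f _ hf
  intro x y h
  exact hg x y fun i hi => h i (by simpa using hi)

lemma aux_safeDiv_mul_le (a b : ℝ≥0∞) : safeDiv a b * b ≤ a := by
  unfold safeDiv
  split_ifs with h
  · simp
  · rw [mul_comm]
    exact ENNReal.mul_div_le

lemma aux_cond_mul_le (c a b : ℝ≥0∞) : safeDiv c (safeDiv a b) * a ≤ b * c := by
  by_cases hb : b = 0
  · simp [safeDiv, hb]
  by_cases hb' : b = ⊤
  · simp [safeDiv, hb']
  have h1 : a = safeDiv a b * b := by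
    simp only [safeDiv, hb, if_false]
    rw [ENNReal.div_mul_cancel hb hb']
  calc safeDiv c (safeDiv a b) * a = safeDiv c (safeDiv a b) * safeDiv a b * b := by
        rw [mul_assoc, ← h1]
    _ ≤ c * b := by gcongr; exact aux_safeDiv_mul_le _ _
    _ = b * c := mul_comm _ _

lemma aux_int_marg (μ : ∀ i, Measure (π i)) [∀ i, SigmaFinite (μ i)] (S : Finset (Fin d))
    (f f' : (∀ i, π i) → ℝ≥0∞) (hf : Measurable f) (hf' : Measurable f')
    (h1' : ∫⁻ x, f' x ∂(Measure.pi μ) = 1) (x : ∀ i, π i) :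
    ∫⁻ x, safeDiv (marginal μ S f' x) (marginal μ S f x) * f x ∂(Measure.pi μ) ≤ 1 := by
  rw [aux_total_mul μ S _ f
    (aux_safeDiv_meas (aux_marg_meas μ S f' hf') (aux_marg_meas μ S f hf)) hf _ x,
    ← h1', aux_total μ S f' hf' x]
  · apply lmarginal_mono
    intro y
    exact aux_safeDiv_mul_le _ _
  · intro x y h
    rw [aux_marg_dep μ S f x y h, aux_marg_dep μ S f' x y h]

lemma aux_cond_dep (μ : ∀ i, Measure (π i)) (A B : Finset (Fin d))
    (f : (∀ i, π i) → ℝ≥0∞) (x y : ∀ i, π i) (h : ∀ i ∈ A ∪ B, x i = y i) :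
    condDens μ A B f x = condDens μ A B f y := by
  unfold condDens
  rw [aux_marg_dep μ _ f x y h,
    aux_marg_dep μ B f x y fun i hi => h i (Finset.mem_union_right _ hi)]

lemma aux_cond_le_one (μ : ∀ i, Measure (π i)) [∀ i, SigmaFinite (μ i)] (A B : Finset (Fin d))
    (hAB : Disjoint A B) (f : (∀ i, π i) → ℝ≥0∞) (hf : Measurable f) (x : ∀ i, π i) :
    lmarginal μ A (condDens μ A B f) x ≤ 1 := by
  have h0 : condDens μ A B f =
      fun x => safeDiv 1 (marginal μ B f x) * marginal μ (A ∪ B) f x := by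
    ext x
    unfold condDens safeDiv
    split_ifs
    · simp
    · rw [one_div, mul_comm, div_eq_mul_inv]
  have h2 : lmarginal μ A (marginal μ (A ∪ B) f) = marginal μ B f := by
    unfold marginal
    rw [← lmarginal_union μ f hf]
    · congr 1
      ext i
      have : i ∈ A → i ∉ B := fun h => Finset.disjoint_left.mp hAB h
      simp only [Finset.mem_union, Finset.mem_compl]
      tauto
    · rw [Finset.disjoint_left]
      intro i hi
      simp [hi]
  rw [h0, aux_pull μ A (fun x => safeDiv 1 (marginal μ B f x)) _ _ (aux_marg_meas μ _ f hf), h2]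
  · exact aux_safeDiv_mul_le _ _
  · intro x y h
    show safeDiv 1 (marginal μ B f x) = safeDiv 1 (marginal μ B f y)
    rw [aux_marg_dep μ B f x y fun i hi => h i (Finset.disjoint_right.mp hAB hi)]

lemma aux_int_cond (μ : ∀ i, Measure (π i)) [∀ i, SigmaFinite (μ i)] (A B : Finset (Fin d))
    (hAB : Disjoint A B)
    (f f' : (∀ i, π i) → ℝ≥0∞) (hf : Measurable f) (hf' : Measurable f')
    (h1 : ∫⁻ x, f x ∂(Measure.pi μ) = 1) (x : ∀ i, π i) :
    ∫⁻ x, safeDiv (condDens μ A B f' x) (condDens μ A B f x) * f x ∂(Measure.pi μ) ≤ 1 := by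
  rw [aux_total_mul μ (A ∪ B) _ f
    (aux_safeDiv_meas (aux_cond_meas μ A B f' hf') (aux_cond_meas μ A B f hf)) hf _ x]
  · calc _ ≤ lmarginal μ (A ∪ B) (fun x => marginal μ B f x * condDens μ A B f' x) x := by
          apply lmarginal_mono
          intro y
          exact aux_cond_mul_le _ _ _
      _ = lmarginal μ B (lmarginal μ A
            (fun x => marginal μ B f x * condDens μ A B f' x)) x := by
          rw [lmarginal_union' μ _ _ hAB]
          exact (aux_marg_meas μ B f hf).mul (aux_cond_meas μ A B f' hf')
      _ ≤ lmarginal μ B (marginal μ B f) x := by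
          rw [aux_pull μ A (marginal μ B f) _ _ (aux_cond_meas μ A B f' hf')]
          · apply lmarginal_mono
            intro y
            calc marginal μ B f y * lmarginal μ A (condDens μ A B f') y
                ≤ marginal μ B f y * 1 := by gcongr; exact aux_cond_le_one μ A B hAB f' hf' y
              _ = _ := mul_one _
          · intro x y h
            exact aux_marg_dep μ B f x y fun i hi => h i (Finset.disjoint_right.mp hAB hi)
      _ = 1 := by rw [← aux_total μ B f hf x, h1]
  · intro x y h
    rw [aux_cond_dep μ A B f x y h, aux_cond_dep μ A B f' x y h]

lemma aux_ae (μ : ∀ i, Measure (π i)) [∀ i, SigmaFinite (μ i)] (S : Finset (Fin d))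
    (f : (∀ i, π i) → ℝ≥0∞) (hf : Measurable f)
    (h1 : ∫⁻ x, f x ∂(Measure.pi μ) = 1) (x : ∀ i, π i) :
    ∀ᵐ x ∂((Measure.pi μ).withDensity f), marginal μ S f x ≠ 0 ∧ marginal μ S f x ≠ ⊤ := by
  have hm := aux_marg_meas μ S f hf
  let g : (∀ i, π i) → ℝ≥0∞ := fun x =>
    ({0, ⊤} : Set ℝ≥0∞).indicator (fun _ => 1) (marginal μ S f x)
  have hset : MeasurableSet ({0, ⊤} : Set ℝ≥0∞) := (Set.toFinite _).measurableSet
  have hg : Measurable g := (measurable_const.indicator hset).comp hm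
  have hz : ∫⁻ x, g x * f x ∂(Measure.pi μ) = 0 := by
    rw [aux_total_mul μ S g f hg hf _ x]
    · have hfin : lmarginal μ S (marginal μ S f) x ≠ ⊤ := by
        rw [← aux_total μ S f hf x, h1]; simp
      unfold lmarginal at hfin ⊢
      have := ae_lt_top (hm.comp measurable_updateFinset) hfin
      refine (lintegral_congr_ae (g := fun _ => 0) ?_).trans lintegral_zero
      filter_upwards [this] with y hy
      simp only [Function.comp] at hy
      by_cases h0 : marginal μ S f (Function.updateFinset x S y) = 0
      · simp [h0]
      · simp [g, h0, hy.ne]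
    · intro x y h
      simp only [g]
      rw [aux_marg_dep μ S f x y h]
  have hz2 : ∫⁻ x, g x ∂((Measure.pi μ).withDensity f) = 0 := by
    rw [lintegral_withDensity_eq_lintegral_mul _ hf hg, ← hz]
    simp [mul_comm]
  rw [lintegral_eq_zero_iff hg] at hz2
  filter_upwards [hz2] with y hy
  by_contra hcon
  have : marginal μ S f y ∈ ({0, ⊤} : Set ℝ≥0∞) := by
    simp only [Set.mem_insert_iff, Set.mem_singleton_iff]; tauto
  simp [g, Set.indicator_of_mem this] at hy

lemma aux_prod {ι : Type*} [Fintype ι] (a b : ι → ℝ≥0∞) (w : ι → ℝ) (hw : ∀ i, 0 ≤ w i)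
    (hb : ∀ i, b i ≠ 0 ∧ b i ≠ ⊤) :
    safeDiv (∏ i, a i ^ w i) (∏ i, b i ^ w i) = ∏ i, safeDiv (a i) (b i) ^ w i := by
  have h0 : ∏ i, b i ^ w i ≠ 0 := by
    rw [Finset.prod_ne_zero_iff]
    intro i _
    exact (ENNReal.rpow_pos (pos_iff_ne_zero.mpr (hb i).1) (hb i).2).ne'
  have h1 : ∀ i ∈ Finset.univ, b i ^ w i ≠ ⊤ := fun i _ =>
    ENNReal.rpow_ne_top_of_nonneg (hw i) (hb i).2
  rw [safeDiv, if_neg h0, ← ENNReal.prod_div_distrib_of_ne_top h1]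
  refine Finset.prod_congr rfl fun i _ => ?_
  rw [safeDiv, if_neg (hb i).1, ENNReal.div_rpow_of_nonneg _ _ (hw i)]

/-- the components of the composite likelihood, indexed by a sum type -/
def auxComp (μ : ∀ i, Measure (π i)) (f : (∀ i, π i) → ℝ≥0∞) (x : ∀ i, π i) :
    Sd d ⊕ Td d → ℝ≥0∞ :=
  Sum.elim (fun S => marginal μ S.1 f x) (fun T => condDens μ T.1.1 T.1.2 f x)

/-- If `X` is an `E`-valued random variable with density `p(·;θ*)`
with respect to `μ`, then for every `θ' ∈ Θ` the single-observation composite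
likelihood ratio has expectation at most one:
`E[p_{α,β}(X;θ') / p_{α,β}(X;θ*)] ≤ 1`, the ratio being `0` when the denominator
is `0`. -/
theorem single_obs_CL_ratio_expectation_le_one
    {d : ℕ} (hd : 1 ≤ d)
    {π : Fin d → Type*} [∀ i, MeasurableSpace (π i)]
    (μ : ∀ i, Measure (π i)) [∀ i, SigmaFinite (μ i)]
    {Θ : Type*} [MeasurableSpace Θ]
    (p : Θ → (∀ i, π i) → ℝ≥0∞)
    (hp_meas : Measurable (Function.uncurry p))
    (hp_prob : ∀ θ : Θ, ∫⁻ x, p θ x ∂(Measure.pi μ) = 1)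
    (α : Sd d → ℝ) (β : Td d → ℝ)
    (hα : ∀ S, 0 ≤ α S) (hβ : ∀ T, 0 ≤ β T)
    (γ : ℝ) (hγ : γ = ∑ S, α S + ∑ T, β T) (hγpos : 0 < γ)
    {Ω : Type*} [MeasurableSpace Ω]
    (Pr : Measure Ω) [IsProbabilityMeasure Pr]
    (θstar : Θ)
    -- `X` is an `E`-valued random variable with density `p(·;θ*)` w.r.t. `μ`
    (X : Ω → ∀ i, π i) (hX : Measurable X)
    (hlaw : Measure.map X Pr = (Measure.pi μ).withDensity (p θstar))
    (θ' : Θ) :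
    (∫⁻ ω, safeDiv (compLik μ α β γ (p θ') (X ω))
        (compLik μ α β γ (p θstar) (X ω)) ∂Pr) ≤ 1 := by
  classical
  rcases isEmpty_or_nonempty (∀ i, π i) with hE | ⟨⟨x0⟩⟩
  · have := hp_prob θstar
    simp at this
  have hm : ∀ θ, Measurable (p θ) := fun θ => hp_meas.comp measurable_prodMk_left
  let w : Sd d ⊕ Td d → ℝ := Sum.elim (fun S => α S / γ) (fun T => β T / γ)
  have hw : ∀ i, 0 ≤ w i := by
    rintro (S | T)
    · exact div_nonneg (hα S) hγpos.le
    · exact div_nonneg (hβ T) hγpos.le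
  have hw1 : ∑ i, w i = 1 := by
    simp only [w, Fintype.sum_sum_type, Sum.elim_inl, Sum.elim_inr]
    rw [← Finset.sum_div, ← Finset.sum_div, ← add_div, ← hγ, div_self hγpos.ne']
  have hcl : ∀ f x, compLik μ α β γ f x = ∏ i, auxComp μ f x i ^ w i := by
    intro f x
    simp [compLik, auxComp, w, Fintype.prod_sum_type]
  have hcm : ∀ θ i, Measurable (fun x => auxComp μ (p θ) x i) := by
    rintro θ (S | T)
    · exact aux_marg_meas μ S.1 _ (hm θ)
    · exact aux_cond_meas μ _ _ _ (hm θ)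
  let r : Sd d ⊕ Td d → (∀ i, π i) → ℝ≥0∞ := fun i x =>
    safeDiv (auxComp μ (p θ') x i) (auxComp μ (p θstar) x i)
  have hr : ∀ i, Measurable (r i) := fun i => aux_safeDiv_meas (hcm θ' i) (hcm θstar i)
  have hclm : ∀ θ, Measurable (fun x => compLik μ α β γ (p θ) x) := by
    intro θ
    simp only [hcl]
    exact Finset.measurable_prod _ fun i _ => (hcm θ i).pow_const _
  have hae : ∀ᵐ x ∂((Measure.pi μ).withDensity (p θstar)),
      safeDiv (compLik μ α β γ (p θ') x) (compLik μ α β γ (p θstar) x) = ∏ i, r i x ^ w i := by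
    have hall : ∀ᵐ x ∂((Measure.pi μ).withDensity (p θstar)), ∀ S : Finset (Fin d),
        marginal μ S (p θstar) x ≠ 0 ∧ marginal μ S (p θstar) x ≠ ⊤ :=
      ae_all_iff.mpr fun S => aux_ae μ S _ (hm θstar) (hp_prob θstar) x0
    filter_upwards [hall] with x hx
    rw [hcl, hcl, aux_prod _ _ _ hw]
    rintro (S | T)
    · exact hx S.1
    · show condDens μ T.1.1 T.1.2 (p θstar) x ≠ 0 ∧ condDens μ T.1.1 T.1.2 (p θstar) x ≠ ⊤
      rw [condDens, safeDiv, if_neg (hx _).1]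
      exact ⟨ENNReal.div_ne_zero.mpr ⟨(hx _).1, (hx _).2⟩,
        ENNReal.div_ne_top (hx _).2 (hx _).1⟩
  have hint : ∀ i, ∫⁻ x, r i x ∂((Measure.pi μ).withDensity (p θstar)) ≤ 1 := by
    intro i
    rw [lintegral_withDensity_eq_lintegral_mul _ (hm θstar) (hr i)]
    simp only [Pi.mul_apply, mul_comm (p θstar _)]
    rcases i with S | T
    · exact aux_int_marg μ S.1 _ _ (hm θstar) (hm θ') (hp_prob θ') x0
    · exact aux_int_cond μ _ _ T.2.2.2 _ _ (hm θstar) (hm θ') (hp_prob θstar) x0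
  rw [← lintegral_map (f := fun x => safeDiv (compLik μ α β γ (p θ') x)
    (compLik μ α β γ (p θstar) x)) (aux_safeDiv_meas (hclm θ') (hclm θstar)) hX, hlaw,
    lintegral_congr_ae hae]
  refine (ENNReal.lintegral_prod_norm_pow_le _ (fun i _ => (hr i).aemeasurable) hw1
    (fun i _ => hw i)).trans ?_
  exact Finset.prod_le_one' fun i _ => ENNReal.rpow_le_one (hint i) (hw i)
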